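/- Let d > 2 be an integer. (i) There exists a constant C > 0, depending only on d, such that for all x, y ∈ ℤ^d with (x,y) ≠ (0,0) and all α ∈ (0,1): Σ_{k≥1} k·(1−α)^k·P(X_k = x)·P(X_k = y) ≤ Σ_{k≥1} k·P(X_k = x)·P(X_k = y) ≤ C/(‖x‖^{2d−4} + ‖y‖^{2d−4}). (ii) For every c₀ > 0 there exist constants c₂ > 0, C′ > 0 and α₀ ∈ (0,1), depending only on d and c₀, such that for all α ∈ (0, α₀) and all x, y ∈ ℤ^d with ‖x‖ + ‖y‖ ≥ c₀/√α: Σ_{k≥1} k·(1−α)^k·P(X_k = x)·P(X_k = y) ≤ C′·e^{−c₂·(‖x‖+‖y‖)·√α}/(‖x‖^{2d−4} + ‖y‖^{2d−4}). -/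

import Mathlib

/-! The proof rests on the local Gaussian bound `P(X_k = x)² ≤ C k ^ (-d) exp(-‖x‖² / (6 k))`
(`walkProb_sq_le`), which is obtained without Fourier analysis.

The exponential generating function (in the number of steps) of the number of walks on `ℤ^d` from
`0` to `x` is the product over the coordinates of the one-dimensional generating functions, because
both satisfy the same differential equation (`srwP_eq`). Its coefficients are sums over the numbers
`l i` of steps taken in each direction, and Cauchy–Schwarz bounds their squares by the multinomial
sum `∑ ∏ 2 ^ l i / (l i)!` times a sum of squared one-dimensional counts. In dimension one, binomial
coefficients give `B(n, z)² ≤ 4 · 4 ^ n / (n + 1) · exp(-z² / (2 (n + 2)))` (`walkCount_sq_le`).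
The factors `1 / (l i + 1)` turn `(l i)!` into `(l i + 1)!`, so the second sum is part of the
multinomial expansion of `(2 d) ^ (k + d) / (k + d)!`, and `k! / (k + d)! ≤ k ^ (-d)`.

With `R = ‖x‖² + ‖y‖²`, the summand `k P(X_k = x) P(X_k = y)` is thus at most a constant times
`k ^ (1 - d) exp(-R / (12 k))`. Half of the exponent makes this `O((k + R) ^ (1 - d))`, dominated by
a telescoping series with sum `O(R ^ (2 - d))` (`tsum_term_le`). In part (ii) the other half is
combined with `(1 - α) ^ k ≤ exp(-α k)`, and
`α k + R / (24 k) ≥ (‖x‖ + ‖y‖) √α / 4`; the hypothesis involving `c₀` is needed only to exclude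
`x = y = 0`. -/

open Filter

noncomputable section

/-- `srwP d k x` is the probability that the simple random walk on `ℤ^d`
started at `0` is at `x` at time `k`. -/
def srwP (d : ℕ) : ℕ → (Fin d → ℤ) → ENNReal
  | 0, x => if x = 0 then 1 else 0
  | k + 1, x =>
      (2 * d : ENNReal)⁻¹ *
        ∑ i : Fin d, (srwP d k (x - Pi.single i 1) + srwP d k (x + Pi.single i 1))

/-- The Euclidean norm on `ℤ^d`. -/
def nrmZ (d : ℕ) (x : Fin d → ℤ) : ℝ := Real.sqrt (∑ i, ((x i : ℝ)) ^ 2)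

/-- The Green's function of the simple random walk on `ℤ^d`. -/
def green (d : ℕ) (x : Fin d → ℤ) : ENNReal := ∑' k : ℕ, srwP d k x

/-- Convolution of two `[0,∞]`-valued functions on `ℤ^d`. -/
def convE (d : ℕ) (f h : (Fin d → ℤ) → ENNReal) (z : Fin d → ℤ) : ENNReal :=
  ∑' x, f x * h (z - x)


/-! ### One-dimensional walk counts -/

/-- `walkCount n z` is the number of nearest-neighbour walks of length `n` on `ℤ` from `0` to `z`. -/
def walkCount : ℕ → ℤ → ℕ
  | 0, z => if z = 0 then 1 else 0
  | n + 1, z => walkCount n (z - 1) + walkCount n (z + 1)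

lemma walkCount_neg (n : ℕ) : ∀ z : ℤ, walkCount n (-z) = walkCount n z := by
  induction n with
  | zero => intro z; simp [walkCount]
  | succ n ih =>
    intro z
    rw [walkCount, walkCount, ← ih (z - 1), ← ih (z + 1), add_comm]
    congr 2 <;> ring

lemma walkCount_eq_zero_of_lt (n : ℕ) : ∀ z : ℤ, z < -n → walkCount n z = 0 := by
  induction n with
  | zero => intro z hz; simp only [walkCount]; rw [if_neg]; push_cast at hz; omega
  | succ n ih =>
    intro z hz
    push_cast at hz
    rw [walkCount, ih _ (by omega), ih _ (by omega)]

lemma walkCount_eq_zero_of_odd (n : ℕ) : ∀ z : ℤ, (n + z) % 2 = 1 → walkCount n z = 0 := by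
  induction n with
  | zero => intro z hz; simp only [walkCount]; rw [if_neg]; push_cast at hz; omega
  | succ n ih =>
    intro z hz
    push_cast at hz
    rw [walkCount, ih _ (by omega), ih _ (by omega)]

lemma walkCount_eq_choose (n : ℕ) : ∀ j : ℕ, walkCount n (2 * j - n) = n.choose j := by
  induction n with
  | zero => intro j; cases j <;> simp [walkCount]; omega
  | succ n ih =>
    intro j
    rw [walkCount]
    cases j with
    | zero =>
      rw [walkCount_eq_zero_of_lt _ _ (by push_cast; omega)]
      have := ih 0
      simp only [Nat.choose_zero_right] at this ⊢
      rw [zero_add]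
      refine Eq.trans ?_ this
      congr 1; push_cast; ring
    | succ j =>
      rw [Nat.choose_succ_succ, ← ih j, ← ih (j + 1)]
      congr 2 <;> push_cast <;> ring

/-- The central binomial coefficient is at most `4 ^ m / √(2 m + 1)`. -/
lemma centralBinom_sq_le (m : ℕ) :
    (m.centralBinom : ℝ) ^ 2 * (2 * m + 1) ≤ 16 ^ m := by
  induction m with
  | zero => simp
  | succ m ih =>
    have h := Nat.succ_mul_centralBinom_succ m
    have h' : ((m : ℝ) + 1) * (m + 1).centralBinom = 2 * (2 * m + 1) * m.centralBinom := by
      exact_mod_cast h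
    have hm : (0 : ℝ) < (m : ℝ) + 1 := by positivity
    have key : ((m : ℝ) + 1) ^ 2 * (((m + 1).centralBinom : ℝ) ^ 2 * (2 * (m + 1) + 1))
        = 4 * ((2 * m + 1) * (2 * m + 3)) * ((m.centralBinom : ℝ) ^ 2 * (2 * m + 1)) := by
      calc _ = (((m : ℝ) + 1) * (m + 1).centralBinom) ^ 2 * (2 * m + 3) := by ring
        _ = _ := by rw [h']; ring
    push_cast
    refine le_of_mul_le_mul_left (a := ((m : ℝ) + 1) ^ 2) ?_ (by positivity)
    rw [key]
    calc _ ≤ 4 * ((2 * (m : ℝ) + 1) * (2 * m + 3)) * 16 ^ m := by gcongr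
      _ ≤ 4 * (4 * ((m : ℝ) + 1) ^ 2) * 16 ^ m := by
        have : (2 * (m : ℝ) + 1) * (2 * m + 3) ≤ 4 * ((m : ℝ) + 1) ^ 2 := by nlinarith
        gcongr
      _ = _ := by rw [pow_succ]; ring

/-- Gaussian decay of binomial coefficients away from the centre, from the ratios
`C(2m, m+j+1) / C(2m, m+j) = 1 - (2j+1)/(m+j+1)`. -/
lemma choose_le_centralBinom_mul_exp (m j : ℕ) :
    ((2 * m).choose (m + j) : ℝ) ≤ m.centralBinom * Real.exp (-((j : ℝ) ^ 2 / (2 * m))) := by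
  induction j with
  | zero => simp [Nat.centralBinom]
  | succ j ih =>
    rcases le_or_gt m j with hj | hj
    · rw [Nat.choose_eq_zero_of_lt (by omega)]
      push_cast
      positivity
    · have h := Nat.choose_succ_right_eq (2 * m) (m + j)
      have h' : ((2 * m).choose (m + (j + 1)) : ℝ) * (m + j + 1) =
          (2 * m).choose (m + j) * (m - j) := by
        have e : 2 * m - (m + j) = m - j := by omega
        rw [e] at h
        rw [← Nat.cast_sub hj.le]
        exact_mod_cast h
      have hjm : (j : ℝ) + 1 ≤ m := by exact_mod_cast hj
      have hm : (0 : ℝ) < m := by have : (0 : ℝ) ≤ j := by positivity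
                                  linarith
      have hpos : (0 : ℝ) < m + j + 1 := by positivity
      have h2 : ((2 * m).choose (m + (j + 1)) : ℝ) =
          (2 * m).choose (m + j) * (1 - (2 * j + 1) / (m + j + 1)) := by
        field_simp
        rw [h']; ring
      have h3 : (1 - (2 * (j : ℝ) + 1) / (m + j + 1)) ≤ Real.exp (-((2 * j + 1) / (2 * m))) := by
        calc _ ≤ 1 - (2 * (j : ℝ) + 1) / (2 * m) := by
              gcongr
              linarith
          _ ≤ _ := Real.one_sub_le_exp_neg _
      rw [h2]
      calc _ ≤ ((2 * m).choose (m + j) : ℝ) * Real.exp (-((2 * j + 1) / (2 * m))) := by gcongr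
        _ ≤ (m.centralBinom * Real.exp (-((j : ℝ) ^ 2 / (2 * m)))) *
            Real.exp (-((2 * j + 1) / (2 * m))) := by gcongr
        _ = _ := by
          rw [mul_assoc, ← Real.exp_add]
          congr 2
          push_cast
          field_simp
          ring

lemma walkCount_even_sq_le (m : ℕ) (z : ℤ) :
    (walkCount (2 * m) z : ℝ) ^ 2 ≤
      16 ^ m / (2 * m + 1) * Real.exp (-((z : ℝ) ^ 2 / (2 * (2 * m + 1)))) := by
  wlog hz : 0 ≤ z generalizing z
  · have := this (-z) (by omega)
    rw [walkCount_neg] at this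
    simpa using this
  rcases Int.emod_two_eq_zero_or_one z with h | h
  · obtain ⟨j, rfl⟩ : ∃ j : ℕ, z = 2 * j := ⟨(z / 2).toNat, by omega⟩
    have e : walkCount (2 * m) (2 * j) = (2 * m).choose (m + j) := by
      rw [← walkCount_eq_choose]
      congr 1; push_cast; ring
    rw [e]
    rcases Nat.eq_zero_or_pos m with rfl | hm
    · rcases Nat.eq_zero_or_pos j with rfl | hj
      · simp
      · rw [Nat.choose_eq_zero_of_lt (by omega), Nat.cast_zero, zero_pow two_ne_zero]
        positivity
    have h1 := choose_le_centralBinom_mul_exp m j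
    have h2 := centralBinom_sq_le m
    calc ((2 * m).choose (m + j) : ℝ) ^ 2
        ≤ (m.centralBinom * Real.exp (-((j : ℝ) ^ 2 / (2 * m)))) ^ 2 := by gcongr
      _ = (m.centralBinom : ℝ) ^ 2 * Real.exp (-((j : ℝ) ^ 2 / (2 * m))) ^ 2 := by ring
      _ ≤ _ := by
        gcongr
        · rw [le_div_iff₀ (by positivity)]; exact h2
        · rw [← Real.exp_nat_mul]
          apply Real.exp_le_exp.mpr
          push_cast
          have hm' : (0 : ℝ) < m := by exact_mod_cast hm
          rw [mul_neg, neg_le_neg_iff, div_le_iff₀ (by positivity)]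
          field_simp
          nlinarith [sq_nonneg (j : ℝ)]
  · rw [walkCount_eq_zero_of_odd _ _ (by push_cast; omega), Nat.cast_zero, zero_pow two_ne_zero]
    positivity

/-- The local Gaussian bound in dimension one. Odd times are reduced to even ones by taking one
further step away from the origin. -/
lemma walkCount_sq_le (n : ℕ) (z : ℤ) :
    (walkCount n z : ℝ) ^ 2 ≤
      4 * 4 ^ n / (n + 1) * Real.exp (-((z : ℝ) ^ 2 / (2 * (n + 2)))) := by
  wlog hz : 0 ≤ z generalizing z
  · have := this (-z) (by omega)
    rw [walkCount_neg] at this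
    simpa using this
  have h16 (m : ℕ) : (16 : ℝ) ^ m = 4 ^ (2 * m) := by rw [pow_mul]; norm_num
  rcases Nat.even_or_odd' n with ⟨m, rfl | rfl⟩
  · refine (walkCount_even_sq_le m z).trans ?_
    rw [h16]
    push_cast
    gcongr
    · linarith [pow_pos (show (0 : ℝ) < 4 by norm_num) (2 * m)]
    · linarith
  · have h1 : walkCount (2 * m + 1) z ≤ walkCount (2 * (m + 1)) (z + 1) := by
      rw [show 2 * (m + 1) = (2 * m + 1) + 1 by ring, walkCount.eq_2 (z + 1)]
      simp
    have h2 := walkCount_even_sq_le (m + 1) (z + 1)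
    have hz' : (0 : ℝ) ≤ z := by exact_mod_cast hz
    calc (walkCount (2 * m + 1) z : ℝ) ^ 2 ≤ (walkCount (2 * (m + 1)) (z + 1) : ℝ) ^ 2 := by
          gcongr
      _ ≤ _ := h2
      _ ≤ _ := by
        rw [h16, show 2 * (m + 1) = (2 * m + 1) + 1 by ring, pow_succ]
        push_cast
        rw [mul_comm ((4 : ℝ) ^ (2 * m + 1)) 4,
          show (2 * ((m : ℝ) + 1) + 1) = 2 * m + 1 + 2 by ring]
        gcongr <;> linarith

/-! ### The walk in dimension `d` -/

/-- Exponential generating function of the one-dimensional walk counts to `z`. -/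
def walkEGF (z : ℤ) : PowerSeries ℝ := PowerSeries.mk fun n => (walkCount n z : ℝ) / n.factorial

/-- The product of the one-dimensional generating functions; it is the exponential generating
function of the numbers of walks of length `k` on `ℤ^d` from `0` to `x`. -/
def walkEGFProd (d : ℕ) (x : Fin d → ℤ) : PowerSeries ℝ := ∏ i, walkEGF (x i)

lemma derivative_walkEGF (z : ℤ) :
    PowerSeries.derivative ℝ (walkEGF z) = walkEGF (z - 1) + walkEGF (z + 1) := by
  ext n
  rw [PowerSeries.coeff_derivative, map_add]
  simp only [walkEGF, PowerSeries.coeff_mk, walkCount, Nat.factorial_succ]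
  push_cast
  field_simp

lemma derivation_prod {ι : Type*} [DecidableEq ι]
    (s : Finset ι) (f : ι → PowerSeries ℝ) :
    PowerSeries.derivative ℝ (∏ i ∈ s, f i) =
      ∑ i ∈ s, PowerSeries.derivative ℝ (f i) * ∏ j ∈ s.erase i, f j := by
  induction s using Finset.induction_on with
  | empty => simp
  | insert a s ha ih =>
    rw [Finset.prod_insert ha, Derivation.leibniz, ih, Finset.sum_insert ha,
      Finset.erase_insert ha, add_comm, smul_eq_mul, smul_eq_mul, mul_comm, Finset.mul_sum]
    congr 1
    refine Finset.sum_congr rfl fun i hi => ?_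
    have hne : a ≠ i := fun h => ha (h ▸ hi)
    rw [Finset.erase_insert_of_ne hne, Finset.prod_insert (by simp [ha])]
    ring

lemma walkEGFProd_update (d : ℕ) (x : Fin d → ℤ) (i : Fin d) (c : ℤ) :
    walkEGFProd d (x + Pi.single i c) =
      walkEGF (x i + c) * ∏ j ∈ Finset.univ.erase i, walkEGF (x j) := by
  rw [walkEGFProd, ← Finset.mul_prod_erase _ _ (Finset.mem_univ i)]
  congr 1
  · simp
  · refine Finset.prod_congr rfl fun j hj => ?_
    simp [Finset.ne_of_mem_erase hj]

lemma derivative_walkEGFProd (d : ℕ) (x : Fin d → ℤ) :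
    PowerSeries.derivative ℝ (walkEGFProd d x) =
      ∑ i, (walkEGFProd d (x - Pi.single i 1) + walkEGFProd d (x + Pi.single i 1)) := by
  conv_lhs => rw [walkEGFProd, derivation_prod]
  refine Finset.sum_congr rfl fun i _ => ?_
  rw [derivative_walkEGF, sub_eq_add_neg x, ← Pi.single_neg, walkEGFProd_update,
    walkEGFProd_update, add_mul]
  rfl

lemma coeff_walkEGF_nonneg (n : ℕ) (z : ℤ) : 0 ≤ PowerSeries.coeff n (walkEGF z) := by
  rw [walkEGF, PowerSeries.coeff_mk]
  positivity

lemma coeff_walkEGFProd_nonneg (d k : ℕ) (x : Fin d → ℤ) :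
    0 ≤ PowerSeries.coeff k (walkEGFProd d x) := by
  rw [walkEGFProd, PowerSeries.coeff_prod]
  exact Finset.sum_nonneg fun l _ => Finset.prod_nonneg fun i _ => coeff_walkEGF_nonneg _ _

/-- The transition probability `P(X_k = x)` as a real number, expressed through the generating
function of the walk counts; see `srwP_eq`. -/
def walkProb (d k : ℕ) (x : Fin d → ℤ) : ℝ :=
  k.factorial * PowerSeries.coeff k (walkEGFProd d x) / (2 * d) ^ k

lemma walkProb_nonneg (d k : ℕ) (x : Fin d → ℤ) : 0 ≤ walkProb d k x := by
  have := coeff_walkEGFProd_nonneg d k x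
  rw [walkProb]
  positivity

lemma srwP_eq (d : ℕ) (hd : 0 < d) (k : ℕ) : ∀ x : Fin d → ℤ,
    srwP d k x = ENNReal.ofReal (walkProb d k x) := by
  unfold walkProb
  induction k with
  | zero =>
    intro x
    rw [srwP, walkEGFProd, PowerSeries.coeff_zero_eq_constantCoeff_apply, map_prod]
    have h (i) : PowerSeries.constantCoeff (walkEGF (x i)) = if x i = 0 then 1 else 0 := by
      rw [← PowerSeries.coeff_zero_eq_constantCoeff_apply, walkEGF, PowerSeries.coeff_mk,
        walkCount]
      simp
    simp only [h, Finset.prod_ite_zero, funext_iff]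
    split_ifs <;> simp_all
  | succ k ih =>
    intro x
    have hd' : (0 : ℝ) < d := by exact_mod_cast hd
    have hc := congrArg (PowerSeries.coeff k) (derivative_walkEGFProd d x)
    rw [PowerSeries.coeff_derivative, map_sum] at hc
    have hnn (x) : 0 ≤ k.factorial * PowerSeries.coeff k (walkEGFProd d x) / (2 * d) ^ k := by
      have := coeff_walkEGFProd_nonneg d k x
      positivity
    rw [srwP]
    simp only [ih]
    have e1 : (2 * d : ENNReal)⁻¹ = ENNReal.ofReal ((2 * d : ℝ)⁻¹) := by
      rw [ENNReal.ofReal_inv_of_pos (by positivity), ENNReal.ofReal_mul (by norm_num)]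
      simp
    simp only [← ENNReal.ofReal_add (hnn _) (hnn _)]
    rw [← ENNReal.ofReal_sum_of_nonneg (fun i _ => add_nonneg (hnn _) (hnn _)), e1,
      ← ENNReal.ofReal_mul (by positivity)]
    congr 1
    rw [Nat.factorial_succ, pow_succ]
    have : ((k + 1) * k.factorial : ℕ) * PowerSeries.coeff (k + 1) (walkEGFProd d x) =
      k.factorial * (PowerSeries.coeff (k + 1) (walkEGFProd d x) * (k + 1)) := by
      push_cast; ring
    rw [this, hc]
    simp only [← add_div, ← mul_add, ← Finset.sum_div, ← Finset.mul_sum, map_add]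
    field_simp

lemma coeff_exp_pow (m n : ℕ) :
    PowerSeries.coeff n (PowerSeries.exp ℝ ^ m) = (m : ℝ) ^ n / n.factorial := by
  rw [PowerSeries.exp_pow_eq_rescale_exp, PowerSeries.coeff_rescale, PowerSeries.coeff_exp]
  simp [div_eq_mul_inv]

/-- The multinomial identity `∑ ∏ 2 ^ lᵢ / lᵢ! = (2 d) ^ k / k!` over `l` with `∑ lᵢ = k`. -/
lemma sum_prod_two_pow (d k : ℕ) :
    ∑ l ∈ Finset.finsuppAntidiag (Finset.univ : Finset (Fin d)) k,
      ∏ i, ((2 : ℝ) ^ (l i) / (l i).factorial) = (2 * d) ^ k / k.factorial := by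
  have h := PowerSeries.coeff_prod (fun _ : Fin d => PowerSeries.exp ℝ ^ 2) k Finset.univ
  rw [Finset.prod_const, Finset.card_univ, Fintype.card_fin, ← pow_mul, coeff_exp_pow] at h
  simp only [coeff_exp_pow] at h
  push_cast at h
  exact h.symm

/-- The shifted sum is part of the multinomial expansion of `(2 d) ^ (k + d) / (k + d)!`. -/
lemma sum_prod_two_pow_succ_le (d k : ℕ) :
    ∑ l ∈ Finset.finsuppAntidiag (Finset.univ : Finset (Fin d)) k,
      ∏ i, ((2 : ℝ) ^ (l i + 1) / (l i + 1).factorial) ≤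
        (2 * d) ^ (k + d) / (k + d).factorial := by
  let G : PowerSeries ℝ := PowerSeries.mk fun n => (2 : ℝ) ^ (n + 1) / (n + 1).factorial
  have h1 := PowerSeries.coeff_prod (fun _ : Fin d => G) k Finset.univ
  have h2 := PowerSeries.coeff_prod (fun _ : Fin d => PowerSeries.X * G) (k + d) Finset.univ
  have h3 : PowerSeries.coeff (k + d) (∏ _i : Fin d, PowerSeries.X * G) =
      PowerSeries.coeff k (∏ _i : Fin d, G) := by
    rw [Finset.prod_mul_distrib, Finset.prod_const, Finset.card_univ, Fintype.card_fin,
      PowerSeries.coeff_X_pow_mul]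
  simp only [G, PowerSeries.coeff_mk] at h1
  rw [← h1, ← h3, h2, ← sum_prod_two_pow]
  have hX (n : ℕ) : 0 ≤ PowerSeries.coeff n (PowerSeries.X * G) ∧
      PowerSeries.coeff n (PowerSeries.X * G) ≤ (2 : ℝ) ^ n / n.factorial := by
    cases n with
    | zero => simp
    | succ n =>
      rw [PowerSeries.coeff_succ_X_mul, PowerSeries.coeff_mk]
      exact ⟨by positivity, le_rfl⟩
  exact Finset.sum_le_sum fun l _ =>
    Finset.prod_le_prod (fun i _ => (hX _).1) fun i _ => (hX _).2

lemma nrmZ_sq (d : ℕ) (x : Fin d → ℤ) : nrmZ d x ^ 2 = ∑ i, (x i : ℝ) ^ 2 :=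
  Real.sq_sqrt (Finset.sum_nonneg fun _ _ => sq_nonneg _)

lemma nrmZ_nonneg (d : ℕ) (x : Fin d → ℤ) : 0 ≤ nrmZ d x := Real.sqrt_nonneg _

/-- Cauchy–Schwarz with respect to the multinomial law of the numbers of steps taken in each
coordinate direction. -/
lemma coeff_walkEGFProd_sq_le (d k : ℕ) (x : Fin d → ℤ) :
    PowerSeries.coeff k (walkEGFProd d x) ^ 2 ≤
      ((2 * d) ^ k / k.factorial) * (2 ^ d * Real.exp (-(nrmZ d x ^ 2 / (2 * (k + 2)))) *
        ((2 * d) ^ (k + d) / (k + d).factorial)) := by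
  set S := Finset.finsuppAntidiag (Finset.univ : Finset (Fin d)) k with hS
  have h0 : PowerSeries.coeff k (walkEGFProd d x) =
      ∑ l ∈ S, ∏ i, ((walkCount (l i) (x i) : ℝ) / (l i).factorial) := by
    rw [walkEGFProd, PowerSeries.coeff_prod]
    simp only [walkEGF, PowerSeries.coeff_mk, hS]
  have hCS : (∑ l ∈ S, ∏ i, ((walkCount (l i) (x i) : ℝ) / (l i).factorial)) ^ 2 ≤
      (∑ l ∈ S, ∏ i, ((2 : ℝ) ^ (l i) / (l i).factorial)) *
      ∑ l ∈ S, ∏ i, ((walkCount (l i) (x i) : ℝ) ^ 2 / (2 ^ (l i) * (l i).factorial)) := by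
    refine Finset.sum_sq_le_sum_mul_sum_of_sq_le_mul S (fun l _ => ?_) (fun l _ => ?_)
      (fun l _ => ?_)
    · positivity
    · positivity
    · rw [← Finset.prod_pow, ← Finset.prod_mul_distrib]
      refine le_of_eq <| Finset.prod_congr rfl fun i _ => ?_
      field_simp
  rw [h0]
  refine hCS.trans ?_
  rw [sum_prod_two_pow]
  gcongr
  refine le_trans ?_ (mul_le_mul_of_nonneg_left (sum_prod_two_pow_succ_le d k) (by positivity))
  rw [Finset.mul_sum]
  refine Finset.sum_le_sum fun l hl => ?_
  have hl' : ∀ i, l i ≤ k := fun i => by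
    rw [← (Finset.mem_finsuppAntidiag.mp hl).1]
    exact Finset.single_le_sum (f := fun i => l i) (fun _ _ => Nat.zero_le _) (Finset.mem_univ i)
  have hexp : (2 : ℝ) ^ d * Real.exp (-(nrmZ d x ^ 2 / (2 * (k + 2)))) =
      ∏ i : Fin d, (2 * Real.exp (-((x i : ℝ) ^ 2 / (2 * (k + 2))))) := by
    rw [Finset.prod_mul_distrib, ← Real.exp_sum, nrmZ_sq]
    simp [Finset.sum_div]
  rw [hexp, ← Finset.prod_mul_distrib]
  refine Finset.prod_le_prod (fun i _ => by positivity) fun i _ => ?_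
  have hb := walkCount_sq_le (l i) (x i)
  have hli : ((l i : ℕ) : ℝ) ≤ k := by exact_mod_cast hl' i
  have h4 : (4 : ℝ) ^ (l i) = 2 ^ (l i) * 2 ^ (l i) := by rw [← mul_pow]; norm_num
  calc (walkCount (l i) (x i) : ℝ) ^ 2 / (2 ^ (l i) * (l i).factorial)
      ≤ (4 * 4 ^ (l i) / (l i + 1) * Real.exp (-((x i : ℝ) ^ 2 / (2 * (k + 2))))) /
          (2 ^ (l i) * (l i).factorial) := by
        gcongr
        refine hb.trans ?_
        gcongr
    _ = _ := by
        rw [h4, Nat.factorial_succ, pow_succ]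
        push_cast
        field_simp
        ring

/-- The local Gaussian upper bound `P(X_k = x)² ≤ C k ^ (-d) exp(-‖x‖² / (6 k))`. -/
lemma walkProb_sq_le (d k : ℕ) (hd : 0 < d) (hk : 0 < k) (x : Fin d → ℤ) :
    walkProb d k x ^ 2 ≤ (4 * d) ^ d / k ^ d * Real.exp (-(nrmZ d x ^ 2 / (6 * k))) := by
  have hd' : (0 : ℝ) < d := by exact_mod_cast hd
  have hk' : (1 : ℝ) ≤ k := by exact_mod_cast hk
  have h1 := coeff_walkEGFProd_sq_le d k x
  have h2 : (k.factorial : ℝ) * k ^ d ≤ (k + d).factorial := by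
    have h := Nat.factorial_mul_pow_le_factorial (m := k) (n := d)
    refine le_trans ?_ (by exact_mod_cast h : (k.factorial : ℝ) * (k + 1) ^ d ≤ _)
    gcongr
    linarith
  have h3 : Real.exp (-(nrmZ d x ^ 2 / (2 * (k + 2)))) ≤
      Real.exp (-(nrmZ d x ^ 2 / (6 * k))) := by
    apply Real.exp_le_exp.mpr
    rw [neg_le_neg_iff]
    apply div_le_div_of_nonneg_left (sq_nonneg _) (by positivity)
    linarith
  have h4 : (k.factorial : ℝ) / (k + d).factorial ≤ 1 / k ^ d := by
    rw [div_le_div_iff₀ (by positivity) (by positivity)]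
    linarith
  rw [walkProb, div_pow, mul_pow]
  calc _ ≤ (k.factorial : ℝ) ^ 2 * (((2 * d) ^ k / k.factorial) *
        (2 ^ d * Real.exp (-(nrmZ d x ^ 2 / (2 * (k + 2)))) *
        ((2 * d) ^ (k + d) / (k + d).factorial))) / ((2 * d) ^ k) ^ 2 := by gcongr
    _ = (4 * d) ^ d * (k.factorial / (k + d).factorial) *
        Real.exp (-(nrmZ d x ^ 2 / (2 * (k + 2)))) := by
      have : (4 * (d : ℝ)) ^ d = 2 ^ d * (2 * d) ^ d := by rw [← mul_pow]; ring
      rw [this, pow_add]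
      field_simp
    _ ≤ (4 * d) ^ d * (1 / k ^ d) * Real.exp (-(nrmZ d x ^ 2 / (6 * k))) := by gcongr
    _ = _ := by ring

lemma walkProb_mul_le (d k : ℕ) (hd : 0 < d) (hk : 0 < k) (x y : Fin d → ℤ) :
    walkProb d k x * walkProb d k y ≤
      (4 * d) ^ d / k ^ d * Real.exp (-((nrmZ d x ^ 2 + nrmZ d y ^ 2) / (12 * k))) := by
  have hk' : (0 : ℝ) < k := by exact_mod_cast hk
  have hx := walkProb_sq_le d k hd hk x
  have hy := walkProb_sq_le d k hd hk y
  refine le_of_sq_le_sq ?_ (by positivity)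
  rw [mul_pow]
  refine (mul_le_mul hx hy (sq_nonneg _) (by positivity)).trans (le_of_eq ?_)
  rw [mul_pow (_ / _), ← Real.exp_nat_mul, mul_mul_mul_comm, ← Real.exp_add, ← sq]
  congr 2
  push_cast
  field_simp
  ring

/-! ### Summation over time -/

/-- The terms of the time sum are dominated by a telescoping difference. -/
lemma term_le_telescope (m : ℕ) : ∃ M : ℝ, 0 < M ∧ ∀ (k : ℕ) (R : ℝ), 1 ≤ R →
    1 / ((k : ℝ) + 1) ^ (m + 2) * Real.exp (-(R / (24 * ((k : ℝ) + 1)))) ≤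
      M * (1 / (R + k) ^ (m + 1) - 1 / (R + (k + 1 : ℕ)) ^ (m + 1)) := by
  refine ⟨(m + 2).factorial * 24 ^ (m + 2) * Real.exp (1 / 24), by positivity, fun k R hR => ?_⟩
  have hk : (0 : ℝ) ≤ k := by positivity
  have ht : (0 : ℝ) < (k : ℝ) + 1 := by positivity
  have hs : 0 < R + k := by linarith
  have hs1 : 0 < R + k + 1 := by linarith
  -- `(1 + u) ^ (m+2) ≤ (m+2)! 24 ^ (m+2) exp ((1 + u) / 24)` with `u = R / (k+1)`
  have h1 := Real.pow_div_factorial_le_exp (x := (1 + R / (k + 1)) / 24) (by positivity) (m + 2)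
  have h2 : (1 + R / ((k : ℝ) + 1)) ^ (m + 2) ≤
      (m + 2).factorial * 24 ^ (m + 2) * Real.exp (1 / 24) * Real.exp (R / (24 * (k + 1))) := by
    rw [mul_assoc _ (Real.exp _), ← Real.exp_add]
    have e : 1 / 24 + R / (24 * ((k : ℝ) + 1)) = (1 + R / (k + 1)) / 24 := by field_simp
    rw [e]
    rw [div_pow, div_div, div_le_iff₀ (by positivity)] at h1
    linarith
  have h3 : 1 / ((k : ℝ) + 1) ^ (m + 2) * Real.exp (-(R / (24 * ((k : ℝ) + 1)))) ≤
      (m + 2).factorial * 24 ^ (m + 2) * Real.exp (1 / 24) * (1 / (R + k + 1) ^ (m + 2)) := by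
    have e : 1 + R / ((k : ℝ) + 1) = (R + k + 1) / (k + 1) := by field_simp; ring
    rw [e, div_pow] at h2
    rw [Real.exp_neg]
    have hE := Real.exp_pos (R / (24 * ((k : ℝ) + 1)))
    rw [div_le_iff₀ (by positivity)] at h2
    rw [mul_one_div, ← one_div, one_div_mul_one_div, div_le_div_iff₀ (by positivity) (by positivity)]
    nlinarith
  refine h3.trans ?_
  gcongr
  have e : R + ((k + 1 : ℕ) : ℝ) = R + k + 1 := by push_cast; ring
  rw [e]
  have hp : (R + k) ^ m ≤ (R + k + 1) ^ m := pow_le_pow_left₀ hs.le (by linarith) m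
  rw [div_sub_div _ _ (by positivity) (by positivity), div_le_div_iff₀ (by positivity)
    (by positivity)]
  -- `(s+1) ^ (m+1) - s ^ (m+1) ≥ (s+1) ^ m` for `s = R + k`
  have h5 : (R + k + 1) ^ m ≤ (R + k + 1) ^ (m + 1) - (R + k) ^ (m + 1) := by
    rw [pow_succ, pow_succ]; nlinarith
  calc 1 * ((R + k) ^ (m + 1) * (R + k + 1) ^ (m + 1))
      = (R + k) ^ (m + 1) * (R + k + 1) ^ (m + 1) := one_mul _
    _ ≤ (R + k + 1) ^ (m + 2) * (R + k) ^ m := by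
      have : (R + k) ^ (m + 1) ≤ (R + k) ^ m * (R + k + 1) := by
        rw [pow_succ]; exact mul_le_mul_of_nonneg_left (by linarith) (by positivity)
      calc _ ≤ (R + k) ^ m * (R + k + 1) * (R + k + 1) ^ (m + 1) := by gcongr
        _ = _ := by ring
    _ ≤ (R + k + 1) ^ (m + 2) * (R + k + 1) ^ m := by gcongr
    _ ≤ (R + k + 1) ^ (m + 2) * ((R + k + 1) ^ (m + 1) - (R + k) ^ (m + 1)) := by gcongr
    _ = _ := by ring

lemma tsum_term_le (m : ℕ) : ∃ M : ℝ, 0 < M ∧ ∀ R : ℝ, 1 ≤ R →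
    ∑' k : ℕ, ENNReal.ofReal (1 / ((k : ℝ) + 1) ^ (m + 2) *
      Real.exp (-(R / (24 * ((k : ℝ) + 1))))) ≤ ENNReal.ofReal (M / R ^ (m + 1)) := by
  obtain ⟨M, hM, h⟩ := term_le_telescope m
  refine ⟨M, hM, fun R hR => ENNReal.tsum_le_of_sum_range_le fun n => ?_⟩
  rw [← ENNReal.ofReal_sum_of_nonneg (fun _ _ => by positivity)]
  apply ENNReal.ofReal_le_ofReal
  refine (Finset.sum_le_sum fun k _ => h k R hR).trans ?_
  rw [← Finset.mul_sum, Finset.sum_range_sub' (fun k : ℕ => 1 / (R + k) ^ (m + 1))]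
  rw [div_eq_mul_one_div M]
  gcongr
  have : 0 ≤ 1 / (R + n) ^ (m + 1) := by positivity
  simp only [Nat.cast_zero, add_zero]
  linarith

/-- The sum with time weights `w` is at most `C / (‖x‖ ^ (2d-4) + ‖y‖ ^ (2d-4))` times any factor
`A` that bounds `w` multiplied by the square root of the Gaussian factor. -/
lemma weighted_tsum_le (d : ℕ) (hd : 2 < d) : ∃ C : ℝ, 0 < C ∧ ∀ (w : ℕ → ℝ) (A : ℝ)
    (x y : Fin d → ℤ), ¬(x = 0 ∧ y = 0) → 0 ≤ A → (∀ k, 0 ≤ w k) →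
    (∀ k : ℕ, 0 < k →
      w k * Real.exp (-((nrmZ d x ^ 2 + nrmZ d y ^ 2) / (24 * k))) ≤ A) →
    ∑' k : ℕ, (k : ENNReal) * ENNReal.ofReal (w k) * (srwP d k x * srwP d k y) ≤
      ENNReal.ofReal (C * A / (nrmZ d x ^ (2 * d - 4) + nrmZ d y ^ (2 * d - 4))) := by
  obtain ⟨m, rfl⟩ : ∃ m, d = m + 3 := ⟨d - 3, by omega⟩
  generalize hdd : m + 3 = d at *
  have hd0 : 0 < d := by omega
  obtain ⟨M, hM, hT⟩ := tsum_term_le m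
  refine ⟨(4 * d) ^ d * M * 2, by positivity, fun w A x y hxy hA hw hwA => ?_⟩
  set R := nrmZ d x ^ 2 + nrmZ d y ^ 2 with hR
  have hone : ∀ z : Fin d → ℤ, z ≠ 0 → 1 ≤ nrmZ d z ^ 2 := fun z hz => by
    obtain ⟨i, hi⟩ := Function.ne_iff.mp hz
    rw [nrmZ_sq]
    have h1 : (1 : ℝ) ≤ (z i : ℝ) ^ 2 := by
      have : 0 < (z i) ^ 2 := by have : z i ≠ 0 := hi
                                 positivity
      exact_mod_cast this
    exact h1.trans (Finset.single_le_sum (f := fun i => (z i : ℝ) ^ 2)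
      (fun _ _ => sq_nonneg _) (Finset.mem_univ i))
  have hR1 : 1 ≤ R := by
    rcases not_and_or.mp hxy with h | h
    · linarith [hone x h, sq_nonneg (nrmZ d y)]
    · linarith [hone y h, sq_nonneg (nrmZ d x)]
  have hx0 := nrmZ_nonneg d x
  have hy0 := nrmZ_nonneg d y
  -- comparison of `‖x‖ ^ (2d-4) + ‖y‖ ^ (2d-4)` with `R ^ (d-2)`
  have e24 : 2 * d - 4 = 2 * (m + 1) := by omega
  have hxR : nrmZ d x ^ (2 * d - 4) ≤ R ^ (m + 1) := by
    rw [e24, pow_mul]; gcongr; rw [hR]; linarith [sq_nonneg (nrmZ d y)]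
  have hyR : nrmZ d y ^ (2 * d - 4) ≤ R ^ (m + 1) := by
    rw [e24, pow_mul]; gcongr; rw [hR]; linarith [sq_nonneg (nrmZ d x)]
  have hpos : 0 < nrmZ d x ^ (2 * d - 4) + nrmZ d y ^ (2 * d - 4) := by
    have hpow : ∀ z : Fin d → ℤ, z ≠ 0 → 0 < nrmZ d z ^ (2 * d - 4) := fun z hz => by
      rw [e24, pow_mul]; have := hone z hz; positivity
    rcases not_and_or.mp hxy with h | h
    · have := hpow x h; positivity
    · have := hpow y h; positivity
  rw [tsum_eq_zero_add' ENNReal.summable]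
  simp only [Nat.cast_zero, zero_mul, zero_add]
  have hterm (k : ℕ) : ((k + 1 : ℕ) : ENNReal) * ENNReal.ofReal (w (k + 1)) *
      (srwP d (k + 1) x * srwP d (k + 1) y) ≤ ENNReal.ofReal ((4 * d) ^ d * A) *
        ENNReal.ofReal (1 / ((k : ℝ) + 1) ^ (m + 2) *
          Real.exp (-(R / (24 * ((k : ℝ) + 1))))) := by
    rw [srwP_eq d hd0, srwP_eq d hd0, ← ENNReal.ofReal_natCast, ← ENNReal.ofReal_mul (by positivity),
      ← ENNReal.ofReal_mul (walkProb_nonneg d _ x),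
      ← ENNReal.ofReal_mul (mul_nonneg (by positivity) (hw _)),
      ← ENNReal.ofReal_mul (by positivity)]
    apply ENNReal.ofReal_le_ofReal
    have h1 := walkProb_mul_le d (k + 1) hd0 k.succ_pos x y
    have h2 := hwA (k + 1) k.succ_pos
    rw [← hR] at h1
    have hw' := hw (k + 1)
    push_cast at h1 h2 ⊢
    have hsplit : Real.exp (-(R / (12 * ((k : ℝ) + 1)))) =
        Real.exp (-(R / (24 * ((k : ℝ) + 1)))) * Real.exp (-(R / (24 * ((k : ℝ) + 1)))) := by
      rw [← Real.exp_add]; congr 1; field_simp; norm_num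
    rw [hsplit] at h1
    have hE := (Real.exp_pos (-(R / (24 * ((k : ℝ) + 1))))).le
    generalize Real.exp (-(R / (24 * ((k : ℝ) + 1)))) = E at *
    have hpow : ((k : ℝ) + 1) ^ d = (k + 1) ^ (m + 2) * (k + 1) := by rw [← hdd, pow_succ]
    calc ((k : ℝ) + 1) * w (k + 1) * (walkProb d (k + 1) x * walkProb d (k + 1) y)
        ≤ ((k : ℝ) + 1) * w (k + 1) * ((4 * d) ^ d / (k + 1) ^ d * (E * E)) := by gcongr
      _ = (4 * d) ^ d * (w (k + 1) * E) * (1 / (k + 1) ^ (m + 2) * E) := by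
        rw [hpow]; field_simp
      _ ≤ (4 * d) ^ d * A * (1 / (k + 1) ^ (m + 2) * E) := by gcongr
  refine (ENNReal.tsum_le_tsum hterm).trans ?_
  rw [ENNReal.tsum_mul_left]
  refine (mul_le_mul_right (hT R hR1) _).trans ?_
  rw [← ENNReal.ofReal_mul (by positivity)]
  apply ENNReal.ofReal_le_ofReal
  rw [mul_div_assoc', div_le_div_iff₀ (by positivity) hpos]
  calc (4 * (d : ℝ)) ^ d * A * M * (nrmZ d x ^ (2 * d - 4) + nrmZ d y ^ (2 * d - 4))
      ≤ (4 * (d : ℝ)) ^ d * A * M * (R ^ (m + 1) + R ^ (m + 1)) := by gcongr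
    _ = _ := by ring

/-- For `d > 2`:
(i) there is `C > 0` (depending only on `d`) such that for all `(x,y) ≠ (0,0)` and all
`α ∈ (0,1)`:
`Σ_k k(1−α)^k P(X_k=x)P(X_k=y) ≤ Σ_k k P(X_k=x)P(X_k=y) ≤ C/(‖x‖^{2d−4}+‖y‖^{2d−4})`;
(ii) for every `c₀ > 0` there are `c₂, C' > 0` and `α₀ ∈ (0,1)` (depending only on `d, c₀`)
such that for `α ∈ (0,α₀)` and `‖x‖+‖y‖ ≥ c₀/√α`:
`Σ_k k(1−α)^k P(X_k=x)P(X_k=y) ≤ C' e^{−c₂(‖x‖+‖y‖)√α}/(‖x‖^{2d−4}+‖y‖^{2d−4})`. -/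
theorem weighted_two_point_bounds (d : ℕ) (hd : 2 < d) :
    (∃ C : ℝ, 0 < C ∧ ∀ x y : Fin d → ℤ, ¬(x = 0 ∧ y = 0) → ∀ α ∈ Set.Ioo (0 : ℝ) 1,
      ∑' k : ℕ, (k : ENNReal) * ENNReal.ofReal ((1 - α) ^ k) * (srwP d k x * srwP d k y) ≤
          ∑' k : ℕ, (k : ENNReal) * (srwP d k x * srwP d k y) ∧
        ∑' k : ℕ, (k : ENNReal) * (srwP d k x * srwP d k y) ≤
          ENNReal.ofReal (C / (nrmZ d x ^ (2 * d - 4) + nrmZ d y ^ (2 * d - 4)))) ∧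
    ∀ c₀ : ℝ, 0 < c₀ →
      ∃ c₂ C' α₀ : ℝ, 0 < c₂ ∧ 0 < C' ∧ α₀ ∈ Set.Ioo (0 : ℝ) 1 ∧
        ∀ α ∈ Set.Ioo (0 : ℝ) α₀, ∀ x y : Fin d → ℤ,
          c₀ / Real.sqrt α ≤ nrmZ d x + nrmZ d y →
            ∑' k : ℕ, (k : ENNReal) * ENNReal.ofReal ((1 - α) ^ k) *
                (srwP d k x * srwP d k y) ≤
              ENNReal.ofReal
                (C' * Real.exp (-(c₂ * (nrmZ d x + nrmZ d y) * Real.sqrt α)) /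
                  (nrmZ d x ^ (2 * d - 4) + nrmZ d y ^ (2 * d - 4))) := by
  obtain ⟨C, hC, h⟩ := weighted_tsum_le d hd
  refine ⟨⟨C, hC, fun x y hxy α hα => ⟨?_, ?_⟩⟩, fun c₀ hc₀ =>
    ⟨1 / 4, C, 1 / 2, by norm_num, hC, by norm_num, fun α hα x y hxy => ?_⟩⟩
  · refine ENNReal.tsum_le_tsum fun k => ?_
    have h1 : ENNReal.ofReal ((1 - α) ^ k) ≤ 1 := by
      rw [ENNReal.ofReal_le_one]
      exact pow_le_one₀ (by linarith [hα.2]) (by linarith [hα.1])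
    calc _ ≤ (k : ENNReal) * 1 * (srwP d k x * srwP d k y) := by gcongr
      _ = _ := by rw [mul_one]
  · have := h (fun _ => 1) 1 x y hxy zero_le_one (fun _ => zero_le_one) (fun k hk => by
      rw [one_mul, Real.exp_le_one_iff, neg_nonpos]
      positivity)
    simpa using this
  · obtain ⟨hα0, hα1⟩ := hα
    have hsα : 0 < Real.sqrt α := Real.sqrt_pos.mpr hα0
    refine h (fun k => (1 - α) ^ k) _ x y ?_ (Real.exp_pos _).le
      (fun k => pow_nonneg (by linarith) k) (fun k hk => ?_)
    · rintro ⟨rfl, rfl⟩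
      have h0 : nrmZ d 0 = 0 := by simp [nrmZ]
      rw [h0, add_zero] at hxy
      exact absurd hxy (not_le.mpr (div_pos hc₀ hsα))
    · have hk' : (0 : ℝ) < k := by exact_mod_cast hk
      have h1 : (1 - α) ^ k ≤ Real.exp (-(k * α)) := by
        rw [← mul_neg, Real.exp_nat_mul]
        exact pow_le_pow_left₀ (by linarith) (Real.one_sub_le_exp_neg α) k
      refine (mul_le_mul_of_nonneg_right h1 (Real.exp_pos _).le).trans ?_
      rw [← Real.exp_add]
      apply Real.exp_le_exp.mpr
      have hsq : α = Real.sqrt α ^ 2 := (Real.sq_sqrt hα0.le).symm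
      generalize Real.sqrt α = t at *
      generalize nrmZ d x = a at *
      generalize nrmZ d y = b at *
      -- `k α + (a² + b²) / (24 k) ≥ (a + b) √α / 4`: arithmetic–geometric means, together with
      -- `a² + b² ≥ (a + b)² / 2`
      suffices 1 / 4 * (a + b) * t ≤ k * α + (a ^ 2 + b ^ 2) / (24 * k) by linarith
      rw [← sub_nonneg]
      have e : k * α + (a ^ 2 + b ^ 2) / (24 * k) - 1 / 4 * (a + b) * t =
          ((k * t - (a + b) / 8) ^ 2 + ((a ^ 2 + b ^ 2) / 24 - (a + b) ^ 2 / 64)) / k := by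
        rw [hsq]
        field_simp
        ring
      rw [e]
      apply div_nonneg _ hk'.le
      nlinarith [sq_nonneg (k * t - (a + b) / 8), sq_nonneg (a - b), sq_nonneg (a + b)]
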